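/- For every n ≥ 1 and every k with 1 ≤ k ≤ n-1, the number of even derangements of [n] with exactly k excedances minus the number of odd derangements of [n] with exactly k excedances equals (-1)^{n-1}. -/

import Mathlib

open Finset MvPolynomial

/-- Number of inversions of a permutation of `Fin n`
(pairs `p.1 < p.2` with `π p.1 > π p.2`). -/
def inversions {n : ℕ} (π : Equiv.Perm (Fin n)) : ℕ :=
  (Finset.univ.filter fun p : Fin n × Fin n => p.1 < p.2 ∧ π p.2 < π p.1).card

/-- Excedance indices of a permutation. -/
def EXCi {n : ℕ} (π : Equiv.Perm (Fin n)) : Finset (Fin n) :=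
  Finset.univ.filter fun i => i < π i

/-- Excedance values of a permutation. -/
def EXCv {n : ℕ} (π : Equiv.Perm (Fin n)) : Finset (Fin n) :=
  (EXCi π).image π

/-- Right-to-left minima indices of a permutation. -/
def RLMi {n : ℕ} (π : Equiv.Perm (Fin n)) : Finset (Fin n) :=
  Finset.univ.filter fun i => ∀ j, i < j → π i < π j

/-- Right-to-left minima values of a permutation. -/
def RLMv {n : ℕ} (π : Equiv.Perm (Fin n)) : Finset (Fin n) :=
  (RLMi π).image π

/-- The derangements of `Fin n`, i.e. permutations with no fixed point. -/
def derangementsF (n : ℕ) : Finset (Equiv.Perm (Fin n)) :=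
  Finset.univ.filter fun π => ∀ i, π i ≠ i

/-! Excedances are the positions below the diagonal, so expanding `det T`, where `T` has `X` below,
`0` on and `1` above the diagonal, gives the signed sum `P` of `X ^ exc π` over derangements `π`.
Subtracting `z` from every entry is a rank-one perturbation, so `det (T - z J)` is an affine
function of `z`; at `z = X` and `z = 1` the matrix is triangular, with determinants `(-X) ^ n` and
`(-1) ^ n`. Interpolating at `z = 0` gives `(1 - X) P = (-X) ^ n - X (-1) ^ n`, hence
`P = (-1) ^ (n - 1) (X + ⋯ + X ^ (n - 1))`. -/

open Matrix
open scoped Polynomial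

section Determinant

variable {ι R : Type*} [CommRing R]

theorem det_add_smul_vecMulVec [Fintype ι] [DecidableEq ι] (A : Matrix ι ι R) (u v : ι → R)
    (z : R) :
    (A + z • vecMulVec u v).det =
      A.det - z * (fromBlocks 0 (replicateRow Unit v) (replicateCol Unit u) A).det := by
  -- `A + z u vᵀ` is a Schur complement in the bordered matrix `N` with first column `(1, -z u)`,
  -- and the determinant is linear in that column.
  set N : Matrix (Unit ⊕ ι) (Unit ⊕ ι) R :=
    fromBlocks 0 (replicateRow Unit v) (replicateCol Unit u) A with hN
  have hcol (c : R) (w : ι → R) : N.updateCol (Sum.inl ()) (Sum.elim (fun _ => c) w) =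
      fromBlocks (c • 1) (replicateRow Unit v) (replicateCol Unit w) A := by
    ext (_ | i) (_ | j) <;> simp [hN]
  have hdet : (N.updateCol (Sum.inl ()) (Sum.elim (fun _ => 1) 0)).det = A.det := by
    rw [hcol, replicateCol_zero, det_fromBlocks_zero₂₁, one_smul, det_one, one_mul]
  have hself : N.updateCol (Sum.inl ()) (Sum.elim (fun _ => 0) u) = N := by
    rw [hcol, zero_smul]
  have hschur : (N.updateCol (Sum.inl ()) (Sum.elim (fun _ => 1) (-z • u))).det =
      (A + z • vecMulVec u v).det := by
    rw [hcol, one_smul, det_fromBlocks_one₁₁, replicateCol_smul, smul_mul, neg_smul,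
      sub_neg_eq_add, vecMulVec_eq Unit]
  have hsplit : (Sum.elim (fun _ => 1) (-z • u) : Unit ⊕ ι → R) =
      Sum.elim (fun _ => 1) 0 + -z • Sum.elim (fun _ => 0) u := by
    ext (_ | i) <;> simp
  rw [← hschur, hsplit, det_updateCol_add, det_updateCol_smul, hdet, hself, neg_mul,
    sub_eq_add_neg]

/-- The square matrix whose entries are `a` below, `d` on and `b` above the diagonal. Its
determinant is the sum of `sign π` times `a ^ exc π * d ^ fix π * b ^ aexc π` over all permutations
`π`, with the number of excedances, fixed points and anti-excedances of `π` as exponents. -/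
def trichotomyMatrix (ι : Type*) {R : Type*} [LinearOrder ι] (a d b : R) : Matrix ι ι R :=
  of fun i j => if j < i then a else if i = j then d else b

variable [LinearOrder ι]

theorem trichotomyMatrix_add_smul_vecMulVec_one (a d b z : R) :
    trichotomyMatrix ι a d b + z • vecMulVec 1 1 = trichotomyMatrix ι (a + z) (d + z) (b + z) := by
  ext i j
  simp only [trichotomyMatrix, Matrix.add_apply, Matrix.smul_apply, vecMulVec_apply, of_apply,
    Pi.one_apply, smul_eq_mul, mul_one]
  split_ifs <;> rfl

variable [Fintype ι]

theorem det_trichotomyMatrix_zero_below (d b : R) :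
    (trichotomyMatrix ι 0 d b).det = d ^ Fintype.card ι := by
  rw [det_of_isUpperTriangular]
  · simp [trichotomyMatrix]
  · intro i j hij
    exact if_pos hij

theorem det_trichotomyMatrix_zero_above (a d : R) :
    (trichotomyMatrix ι a d 0).det = d ^ Fintype.card ι := by
  rw [det_of_isLowerTriangular]
  · simp [trichotomyMatrix]
  · intro i j hij
    have hij : i < j := hij
    simp [trichotomyMatrix, hij.not_gt, hij.ne]

theorem sub_mul_det_trichotomyMatrix (a d b : R) :
    (b - a) * (trichotomyMatrix ι a d b).det =
      b * (d - a) ^ Fintype.card ι - a * (d - b) ^ Fintype.card ι := by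
  have affine := det_add_smul_vecMulVec (trichotomyMatrix ι a d b) 1 1
  simp only [trichotomyMatrix_add_smul_vecMulVec_one] at affine
  have below := affine (-a)
  have above := affine (-b)
  rw [add_neg_cancel, det_trichotomyMatrix_zero_below] at below
  rw [add_neg_cancel, det_trichotomyMatrix_zero_above] at above
  linear_combination a * above - b * below

end Determinant

theorem sign_eq_neg_one_pow_inversions {n : ℕ} (π : Equiv.Perm (Fin n)) :
    Equiv.Perm.sign π = (-1) ^ inversions π := by
  rw [Equiv.Perm.sign_eq_prod_prod_Ioi, inversions, ← prod_const, prod_filter,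
    ← univ_product_univ, prod_product]
  refine prod_congr rfl fun i _ => ?_
  rw [← filter_lt_eq_Ioi, prod_filter]
  refine prod_congr rfl fun j _ => ?_
  by_cases hij : i < j
  · rcases (π.injective.ne hij.ne).lt_or_gt with h | h <;> simp [hij, h, h.not_gt]
  · simp [hij]

theorem sum_neg_one_pow_eq_card_even_sub_card_odd {α R : Type*} [Ring R] (s : Finset α)
    (f : α → ℕ) :
    ∑ i ∈ s, (-1 : R) ^ f i = #{i ∈ s | Even (f i)} - #{i ∈ s | ¬Even (f i)} := by
  rw [← sum_filter_add_sum_filter_not s fun i => Even (f i), sub_eq_add_neg]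
  congr 1
  · rw [sum_congr rfl fun i hi => (mem_filter.1 hi).2.neg_one_pow, sum_const, nsmul_one]
  · rw [sum_congr rfl fun i hi => (Nat.not_even_iff_odd.1 (mem_filter.1 hi).2).neg_one_pow,
      sum_const, nsmul_eq_mul, mul_neg_one]

theorem prod_trichotomyMatrix_perm {M : Type*} [CommMonoidWithZero M] {n : ℕ} (x : M)
    (π : Equiv.Perm (Fin n)) :
    ∏ i, trichotomyMatrix (Fin n) x 0 1 (π i) i =
      if ∀ i, π i ≠ i then x ^ #(EXCi π) else 0 := by
  split_ifs with hπ
  · rw [EXCi, ← prod_const, prod_filter]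
    exact prod_congr rfl fun i _ => by simp [trichotomyMatrix, hπ i]
  · push Not at hπ
    obtain ⟨i, hi⟩ := hπ
    exact prod_eq_zero (mem_univ i) (by simp [trichotomyMatrix, hi])

/-- The generating polynomial of the derangements of `Fin n` by number of excedances, each
derangement being counted with its sign. -/
noncomputable def signedDerangementPoly (n : ℕ) : ℤ[X] :=
  ∑ π ∈ derangementsF n, Polynomial.C (Equiv.Perm.sign π : ℤ) * Polynomial.X ^ #(EXCi π)

theorem det_trichotomyMatrix_eq_signedDerangementPoly (n : ℕ) :
    (trichotomyMatrix (Fin n) (Polynomial.X : ℤ[X]) 0 1).det = signedDerangementPoly n := by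
  simp only [det_apply', prod_trichotomyMatrix_perm, mul_ite, mul_zero, signedDerangementPoly,
    derangementsF, sum_filter, eq_intCast]

theorem one_sub_X_mul_signedDerangementPoly (n : ℕ) :
    (1 - Polynomial.X) * signedDerangementPoly n =
      (-Polynomial.X) ^ n - Polynomial.X * (-1) ^ n := by
  simpa only [det_trichotomyMatrix_eq_signedDerangementPoly, Fintype.card_fin, zero_sub, one_mul]
    using sub_mul_det_trichotomyMatrix (ι := Fin n) (Polynomial.X : ℤ[X]) 0 1

theorem signedDerangementPoly_eq_sum_X_pow {n : ℕ} (hn : 1 ≤ n) :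
    signedDerangementPoly n = Polynomial.C ((-1) ^ (n - 1)) * ∑ i ∈ Ico 1 n, Polynomial.X ^ i := by
  have hgeom := geom_sum_Ico_mul (Polynomial.X : ℤ[X]) hn
  have hsign : (-1 : ℤ[X]) ^ n = -(-1) ^ (n - 1) := by
    rw [← pow_sub_one_mul (Nat.ne_zero_of_lt hn), mul_neg_one]
  have hne : (1 - Polynomial.X : ℤ[X]) ≠ 0 := sub_ne_zero.2 (Polynomial.X_ne_C 1).symm
  refine mul_left_cancel₀ hne ?_
  rw [one_sub_X_mul_signedDerangementPoly, neg_pow (Polynomial.X : ℤ[X]), hsign, map_pow, map_neg,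
    map_one]
  linear_combination (-1) ^ (n - 1) * hgeom

theorem coeff_signedDerangementPoly (n k : ℕ) :
    (signedDerangementPoly n).coeff k =
      #{π ∈ derangementsF n | Even (inversions π) ∧ #(EXCi π) = k} -
        #{π ∈ derangementsF n | ¬Even (inversions π) ∧ #(EXCi π) = k} := by
  calc (signedDerangementPoly n).coeff k
      = ∑ π ∈ derangementsF n with #(EXCi π) = k, (-1) ^ inversions π := by
        simp only [signedDerangementPoly, Polynomial.finsetSum_coeff, Polynomial.coeff_C_mul,
          Polynomial.coeff_X_pow, mul_ite, mul_one, mul_zero, sum_filter, eq_comm (a := k),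
          sign_eq_neg_one_pow_inversions, Units.val_pow_eq_pow_val, Units.val_neg, Units.val_one]
    _ = _ := by
        simp only [sum_neg_one_pow_eq_card_even_sub_card_odd, filter_filter, and_comm]

theorem stmt4 (n k : ℕ) (hn : 1 ≤ n) (hk1 : 1 ≤ k) (hk2 : k ≤ n - 1) :
    (((derangementsF n).filter fun π => Even (inversions π) ∧ (EXCi π).card = k).card : ℤ)
      - ((derangementsF n).filter fun π => ¬ Even (inversions π) ∧ (EXCi π).card = k).card
    = (-1) ^ (n - 1) := by
  have hk : k ∈ Ico 1 n := mem_Ico.2 ⟨hk1, by omega⟩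
  rw [← coeff_signedDerangementPoly, signedDerangementPoly_eq_sum_X_pow hn, Polynomial.coeff_C_mul,
    Polynomial.finsetSum_coeff]
  simp only [Polynomial.coeff_X_pow, sum_ite_eq, if_pos hk, mul_one]
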